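/- Let 2 ≤ p < ∞. There is a constant c > 0 (depending only on p) such that for all d ≥ 2 and all ε ∈ (0, 1/2), the information complexity of L_p-approximation on F_d^log satisfies n(ε, F_d^log, L_p) ≤ c · d · ε^{-3p/2} · log³(ε^{-p}). -/

import Mathlib

open MeasureTheory Real Finset

noncomputable section

/-- The unit cube `[0,1]^d`. -/
def cube (d : ℕ) : Set (Fin d → ℝ) := Set.univ.pi fun _ => Set.Icc 0 1

/-- The trigonometric character `e^{2πi⟨k,x⟩}`. -/
def eK (d : ℕ) (k : Fin d → ℤ) (x : Fin d → ℝ) : ℂ :=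
  Complex.exp (2 * Real.pi * Complex.I * ∑ i, (k i : ℂ) * (x i : ℂ))

/-- The Fourier coefficient `f̂(k) = ∫_{[0,1]^d} f(x) e^{-2πi⟨k,x⟩} dx`. -/
def fCoeff (d : ℕ) (f : (Fin d → ℝ) → ℂ) (k : Fin d → ℤ) : ℂ :=
  ∫ x in cube d, f x * Complex.exp (-(2 * Real.pi * Complex.I) * ∑ i, (k i : ℂ) * (x i : ℂ))

/-- `f` is 1-periodic in each coordinate. -/
def Periodic1 (d : ℕ) (f : (Fin d → ℝ) → ℂ) : Prop :=
  ∀ (x : Fin d → ℝ) (i : Fin d), f (Function.update x i (x i + 1)) = f x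

/-- The weight `max(1, log ‖k‖_∞)`. -/
def logWeight (d : ℕ) (k : Fin d → ℤ) : ℝ :=
  max 1 (Real.log ((Finset.univ.sup fun i => (k i).natAbs : ℕ) : ℝ))

/-- The class `F_d^log` of continuous 1-periodic functions with
`∑_k |f̂(k)| max(1, log ‖k‖_∞) ≤ 1`. -/
def FdLog (d : ℕ) : Set ((Fin d → ℝ) → ℂ) :=
  {f | Continuous f ∧ Periodic1 d f ∧
    Summable (fun k : Fin d → ℤ => ‖fCoeff d f k‖ * logWeight d k) ∧
    ∑' k : Fin d → ℤ, ‖fCoeff d f k‖ * logWeight d k ≤ 1}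


lemma exists_points {X V : Type*} [MeasurableSpace X] (μ : Measure X) [IsProbabilityMeasure μ]
    (S : Set X) (hS : μ Sᶜ = 0) (T : Finset V) (ψ : V → X → ℝ) (hm : ∀ v, Integrable (ψ v) μ)
    (h0 : ∀ v x, 0 ≤ ψ v x) (r : ℝ) (hr : ∀ v ∈ T, ∫ x, ψ v x ∂μ ≤ r) (hr0 : 0 ≤ r) (n : ℕ) :
    ∃ x : Fin n → X, (∀ i, x i ∈ S) ∧ ∑ v ∈ T, ∏ i, ψ v (x i) ≤ T.card * r ^ n := by
  induction n with
  | zero => exact ⟨Fin.elim0, fun i => i.elim0, by simp⟩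
  | succ n ih =>
    obtain ⟨x, hxS, hx⟩ := ih
    have hint : Integrable (fun y => ∑ v ∈ T, ψ v y * ∏ i, ψ v (x i)) μ :=
      integrable_finsetSum _ fun v _ => (hm v).mul_const _
    obtain ⟨y, hyS, hy⟩ := exists_notMem_null_le_integral hint hS
    refine ⟨Fin.cons y x, ?_, ?_⟩
    · intro i
      refine Fin.cases ?_ (fun i => ?_) i
      · simpa using hyS
      · simpa using hxS i
    · simp only [Fin.prod_univ_succ, Fin.cons_zero, Fin.cons_succ]
      refine hy.trans ?_
      rw [integral_finsetSum _ fun v _ => (hm v).mul_const _]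
      simp only [integral_mul_const]
      calc ∑ v ∈ T, (∫ y, ψ v y ∂μ) * ∏ i, ψ v (x i) ≤ ∑ v ∈ T, r * ∏ i, ψ v (x i) := by
            refine Finset.sum_le_sum fun v hv => ?_
            exact mul_le_mul_of_nonneg_right (hr v hv) (Finset.prod_nonneg fun i _ => h0 v _)
        _ = r * ∑ v ∈ T, ∏ i, ψ v (x i) := by rw [Finset.mul_sum]
        _ ≤ r * (T.card * r ^ n) := by gcongr
        _ = _ := by ring

open Classical in
lemma hitting {X V : Type*} [MeasurableSpace X] (μ : Measure X) [IsProbabilityMeasure μ]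
    (S : Set X) (hS : μ Sᶜ = 0) [Fintype V] (E : V → Set X) (hE : ∀ v, MeasurableSet (E v))
    (q : ℝ) (hq : 0 ≤ q) (hq1 : q ≤ 1) (n : ℕ) (hn : (Fintype.card V : ℝ) < exp (q * n / 4)) :
    ∃ x : Fin n → X, (∀ i, x i ∈ S) ∧ ∀ v, q ≤ μ.real (E v) →
      q * n / 4 < ((univ.filter fun i => x i ∈ E v).card : ℝ) := by
  set ψ : V → X → ℝ := fun v x => 1 - (E v).indicator (fun _ => 1/2) x with hψ
  have hI : ∀ v, Integrable ((E v).indicator (fun _ => (1/2 : ℝ))) μ := fun v =>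
    (integrable_const _).indicator (hE v)
  have hψ' : ∀ v x, ψ v x = if x ∈ E v then 1/2 else 1 := by
    intro v x
    by_cases h : x ∈ E v <;> simp [hψ, h]
    norm_num
  obtain ⟨x, hxS, hx⟩ := exists_points μ S hS (univ.filter fun v => q ≤ μ.real (E v)) ψ
    (fun v => (integrable_const _).sub (hI v))
    (fun v x => by rw [hψ']; split_ifs <;> norm_num) (1 - q / 2)
    (fun v hv => by
      simp only [mem_filter, mem_univ, true_and] at hv
      simp only [hψ]
      rw [integral_sub (integrable_const _) (hI v), integral_indicator (hE v)]
      simp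
      linarith) (by linarith) n
  refine ⟨x, hxS, fun v hv => ?_⟩
  by_contra hcon
  push Not at hcon
  have h1 : ∏ i, ψ v (x i) ≤ ∑ v ∈ univ.filter (fun v => q ≤ μ.real (E v)), ∏ i, ψ v (x i) := by
    refine Finset.single_le_sum (f := fun v => ∏ i, ψ v (x i)) (fun v _ => Finset.prod_nonneg fun i _ => ?_) (by simpa using hv)
    rw [hψ']; split_ifs <;> norm_num
  have h2 : ∏ i, ψ v (x i) = (1/2 : ℝ) ^ (univ.filter fun i => x i ∈ E v).card := by
    simp only [hψ']
    rw [Finset.prod_ite]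
    simp
  have h3 : exp (- (q * n / 4)) ≤ (1/2 : ℝ) ^ (univ.filter fun i => x i ∈ E v).card := by
    calc exp (- (q * n / 4)) ≤ exp (-1 * ((univ.filter fun i => x i ∈ E v).card : ℝ)) := by
          apply exp_le_exp.mpr; linarith
      _ = exp (-1) ^ (univ.filter fun i => x i ∈ E v).card := by
          rw [← exp_nat_mul]; ring_nf
      _ ≤ _ := by
          gcongr
          rw [exp_neg, one_div]
          gcongr
          linarith [Real.add_one_le_exp (1:ℝ)]
  have h4 : (1 - q/2)^n ≤ exp (-(q * n / 2)) := by
    calc (1 - q/2)^n ≤ exp (-(q/2)) ^ n := by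
          gcongr
          · linarith
          · linarith [Real.add_one_le_exp (-(q/2))]
      _ = _ := by rw [← exp_nat_mul]; ring_nf
  have h5 : ((univ.filter fun v => q ≤ μ.real (E v)).card : ℝ) ≤ Fintype.card V := by
    exact_mod_cast Finset.card_le_univ _
  have h6 : exp (- (q * n / 4)) ≤ Fintype.card V * exp (-(q * n / 2)) := by
    refine h3.trans (h2 ▸ h1.trans (hx.trans ?_))
    have : (0:ℝ) ≤ (1 - q/2)^n := pow_nonneg (by linarith) _
    gcongr
  have h7 : Fintype.card V * exp (-(q * n / 2)) < exp (q * n / 4) * exp (-(q * n / 2)) := by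
    gcongr
  rw [← exp_add] at h7
  have := h6.trans_lt h7
  rw [exp_lt_exp] at this
  linarith

/-- one-sided tail for i.i.d. sampling with weights w. -/
lemma tail_one {I : Type*} [Fintype I] (w : I → ℝ) (hw : ∀ i, 0 ≤ w i) (hw1 : ∑ i, w i = 1)
    (u : I → ℝ) (hu : ∀ i, |u i| ≤ 1) (s : ℝ) (hs : 0 ≤ s) (hs1 : s ≤ 1) (L : ℕ) :
    ∑ v : Fin L → I, (∏ j, w (v j)) *
      (if L * s ≤ ∑ j, (u (v j) - ∑ i, w i * u i) then 1 else 0) ≤ exp (-(L * s ^ 2 / 4)) := by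
  set a := ∑ i, w i * u i with ha
  have ha1 : |a| ≤ 1 := by
    calc |a| ≤ ∑ i, |w i * u i| := Finset.abs_sum_le_sum_abs _ _
      _ ≤ ∑ i, w i := by
        refine Finset.sum_le_sum fun i _ => ?_
        rw [abs_mul, abs_of_nonneg (hw i)]
        exact mul_le_of_le_one_right (hw i) (hu i)
      _ = 1 := hw1
  have key : ∑ i, w i * exp (s / 2 * (u i - a)) ≤ exp (s ^ 2 / 4) := by
    have h1 : ∀ i, w i * exp (s / 2 * (u i - a)) ≤
        w i * (1 + s / 2 * (u i - a) + (s / 2) ^ 2 * (u i - a) ^ 2) := by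
      intro i
      refine mul_le_mul_of_nonneg_left ?_ (hw i)
      have hle : |s / 2 * (u i - a)| ≤ 1 := by
        rw [abs_mul, abs_of_nonneg (by linarith : 0 ≤ s/2)]
        have : |u i - a| ≤ 2 := (abs_sub _ _).trans (by linarith [hu i])
        nlinarith [abs_nonneg (u i - a)]
      have := (abs_le.mp (Real.abs_exp_sub_one_sub_id_le hle)).2
      nlinarith
    have h2 : ∑ i, w i * (u i) ^ 2 ≤ 1 := by
      rw [← hw1]
      refine Finset.sum_le_sum fun i _ => mul_le_of_le_one_right (hw i) ?_
      rw [sq_le_one_iff_abs_le_one]; exact hu i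
    calc _ ≤ ∑ i, w i * (1 + s / 2 * (u i - a) + (s / 2) ^ 2 * (u i - a) ^ 2) :=
          Finset.sum_le_sum fun i _ => h1 i
      _ = ∑ i, ((1 - s / 2 * a + (s/2)^2 * a^2) * w i + (s/2 - 2 * (s/2)^2 * a) * (w i * u i)
            + (s/2)^2 * (w i * u i ^ 2)) := by
          refine Finset.sum_congr rfl fun i _ => by ring
      _ = (1 - s / 2 * a + (s/2)^2 * a^2) * 1 + (s/2 - 2 * (s/2)^2 * a) * a
            + (s/2)^2 * ∑ i, (w i * u i ^ 2) := by
          rw [Finset.sum_add_distrib, Finset.sum_add_distrib, ← Finset.mul_sum, ← Finset.mul_sum,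
            ← Finset.mul_sum, hw1, ← ha]
      _ ≤ s ^ 2 / 4 + 1 := by nlinarith [sq_nonneg (s/2), sq_nonneg (s/2*a)]
      _ ≤ _ := Real.add_one_le_exp _
  calc _ ≤ ∑ v : Fin L → I, (∏ j, w (v j)) *
        (exp (-(L * s ^ 2 / 2)) * ∏ j, exp (s / 2 * (u (v j) - a))) := by
        refine Finset.sum_le_sum fun v _ => ?_
        refine mul_le_mul_of_nonneg_left ?_ (Finset.prod_nonneg fun j _ => hw _)
        split_ifs with h
        · rw [← exp_sum, ← exp_add, ← Finset.mul_sum]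
          apply Real.one_le_exp
          nlinarith
        · positivity
    _ = exp (-(L * s ^ 2 / 2)) * (∑ i, w i * exp (s / 2 * (u i - a))) ^ L := by
        rw [Fintype.sum_pow, Finset.mul_sum]
        refine Finset.sum_congr rfl fun v _ => ?_
        rw [Finset.prod_mul_distrib]; ring
    _ ≤ exp (-(L * s ^ 2 / 2)) * (exp (s ^ 2 / 4)) ^ L := by
        gcongr
        exact Finset.sum_nonneg fun i _ => mul_nonneg (hw i) (exp_pos _).le
    _ = _ := by
        rw [← exp_nat_mul, ← exp_add]; ring_nf

lemma tail_c {I : Type*} [Fintype I] (w : I → ℝ) (hw : ∀ i, 0 ≤ w i) (hw1 : ∑ i, w i = 1)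
    (z : I → ℂ) (hz : ∀ i, ‖z i‖ ≤ 1) (t : ℝ) (ht : 0 ≤ t) (ht1 : t ≤ 1) (L : ℕ) :
    ∑ v : Fin L → I, (∏ j, w (v j)) *
      (if L * (t / 4) ≤ ‖∑ j, z (v j) - L * ∑ i, (w i : ℂ) * z i‖ then 1 else 0) ≤
        4 * exp (-(L * t ^ 2 / 256)) := by
  have hre : ∀ i, |(z i).re| ≤ 1 := fun i => (Complex.abs_re_le_norm _).trans (hz i)
  have him : ∀ i, |(z i).im| ≤ 1 := fun i => (Complex.abs_im_le_norm _).trans (hz i)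
  have hs0 : 0 ≤ t / 8 := by linarith
  have hs1 : t / 8 ≤ 1 := by linarith
  have e1 := tail_one w hw hw1 (fun i => (z i).re) hre (t/8) hs0 hs1 L
  have e2 := tail_one w hw hw1 (fun i => -(z i).re) (by simpa using hre) (t/8) hs0 hs1 L
  have e3 := tail_one w hw hw1 (fun i => (z i).im) him (t/8) hs0 hs1 L
  have e4 := tail_one w hw hw1 (fun i => -(z i).im) (by simpa using him) (t/8) hs0 hs1 L
  have hexp : exp (-(L * (t/8) ^ 2 / 4)) = exp (-(L * t ^ 2 / 256)) := by ring_nf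
  rw [hexp] at e1 e2 e3 e4
  have : 4 * exp (-(L * t ^ 2 / 256)) = exp (-(L * t ^ 2 / 256)) + exp (-(L * t ^ 2 / 256)) +
    exp (-(L * t ^ 2 / 256)) + exp (-(L * t ^ 2 / 256)) := by ring
  rw [this]
  refine le_trans ?_ (add_le_add (add_le_add (add_le_add e1 e2) e3) e4)
  rw [← Finset.sum_add_distrib, ← Finset.sum_add_distrib, ← Finset.sum_add_distrib]
  refine Finset.sum_le_sum fun v _ => ?_
  rw [← mul_add, ← mul_add, ← mul_add]
  refine mul_le_mul_of_nonneg_left ?_ (Finset.prod_nonneg fun j _ => hw _)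
  set D := ∑ j, z (v j) - L * ∑ i, (w i : ℂ) * z i with hD
  have r1 : ∑ j, ((z (v j)).re - ∑ i, w i * (z i).re) = D.re := by
    simp [hD, Finset.sum_sub_distrib]
  have r2 : ∑ j, (-(z (v j)).re - ∑ i, w i * -(z i).re) = -D.re := by
    simp [hD, Finset.sum_add_distrib]; ring
  have r3 : ∑ j, ((z (v j)).im - ∑ i, w i * (z i).im) = D.im := by
    simp [hD, Finset.sum_sub_distrib]
  have r4 : ∑ j, (-(z (v j)).im - ∑ i, w i * -(z i).im) = -D.im := by
    simp [hD, Finset.sum_add_distrib]; ring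
  rw [r1, r2, r3, r4]
  have hn := Complex.norm_le_abs_re_add_abs_im D
  by_cases h : L * (t / 4) ≤ ‖D‖
  · rw [if_pos h]
    have h8 : L * (t/8) ≤ |D.re| ∨ L * (t/8) ≤ |D.im| := by
      by_contra hc
      push Not at hc
      linarith [hc.1, hc.2]
    have p : ∀ (P : Prop) [Decidable P], (0:ℝ) ≤ if P then 1 else 0 := by
      intro P _; split_ifs <;> norm_num
    have p1 := p (L * (t/8) ≤ D.re)
    have p2 := p (L * (t/8) ≤ -D.re)
    have p3 := p (L * (t/8) ≤ D.im)
    have p4 := p (L * (t/8) ≤ -D.im)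
    rcases h8 with h8 | h8 <;> rcases le_abs.mp h8 with h9 | h9
    · rw [if_pos h9] at *; linarith
    · rw [if_pos h9] at *; linarith
    · rw [if_pos h9] at *; linarith
    · rw [if_pos h9] at *; linarith
  · rw [if_neg h]
    positivity

open Classical in
lemma level {X I : Type*} [MeasurableSpace X] (μ : Measure X) [IsProbabilityMeasure μ]
    (S : Set X) (hS : μ Sᶜ = 0) [Fintype I] [Nonempty I] (g : I → X → ℂ)
    (hg : ∀ i, Measurable (g i))
    (hg1 : ∀ i x, ‖g i x‖ ≤ 1) (t m : ℝ) (ht : 0 < t) (ht1 : t ≤ 1) (hm : 0 < m) (hm1 : m ≤ 1)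
    (L n : ℕ) (hL : 64 * exp (-(L * t ^ 2 / 256)) < m)
    (hn : (Fintype.card I : ℝ) ^ L < exp (m * n / 8)) :
    ∃ x : Fin n → X, (∀ i, x i ∈ S) ∧ ∀ w : I → ℝ, (∀ i, 0 ≤ w i) → ∑ i, w i = 1 →
      (∀ j, ‖∑ i, (w i : ℂ) * g i (x j)‖ ≤ t / 2) →
        μ.real {y | t ≤ ‖∑ i, (w i : ℂ) * g i y‖} ≤ m := by
  have hHm : ∀ v : Fin L → I, Measurable fun y => ∑ j, g (v j) y := fun v =>
    Finset.measurable_sum _ fun j _ => hg _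
  obtain ⟨x, hxS, hx⟩ := hitting μ S hS
    (fun v : Fin L → I => {y | L * (3 * t / 4) ≤ ‖∑ j, g (v j) y‖})
    (fun v => measurableSet_le measurable_const (hHm v).norm) (m/2) (by linarith) (by linarith) n
    (by simpa [show m / 2 * n / 4 = m * n / 8 by ring] using hn)
  refine ⟨x, hxS, fun w hw hw1 hsmall => ?_⟩
  by_contra hcon
  push Not at hcon
  set h : X → ℂ := fun y => ∑ i, (w i : ℂ) * g i y with hh
  have hhm : Measurable h := Finset.measurable_sum _ fun i _ => (hg i).const_mul _
  have hn0 : 0 < (n : ℝ) := by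
    by_contra hc
    have : (n : ℝ) = 0 := le_antisymm (not_lt.mp hc) (Nat.cast_nonneg _)
    rw [this] at hn
    have h1 : (1:ℝ) ≤ (Fintype.card I : ℝ) ^ L := one_le_pow₀ (by exact_mod_cast Fintype.card_pos)
    simp at hn
    linarith
  have hL0 : 0 < (L : ℝ) := by
    by_contra hc
    have : (L : ℝ) = 0 := le_antisymm (not_lt.mp hc) (Nat.cast_nonneg _)
    rw [this] at hL
    simp at hL
    linarith
  set B : (Fin L → I) → Set X := fun v => {y | L * (t / 4) ≤ ‖∑ j, g (v j) y - L * h y‖} with hB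
  have hBm : ∀ v, MeasurableSet (B v) := fun v =>
    measurableSet_le measurable_const ((hHm v).sub (hhm.const_mul _)).norm
  have htail : ∀ y, ∑ v : Fin L → I, (∏ j, w (v j)) * (B v).indicator (fun _ => (1:ℝ)) y ≤
      4 * exp (-(L * t ^ 2 / 256)) := by
    intro y
    have := tail_c w hw hw1 (fun i => g i y) (fun i => hg1 i y) t ht.le ht1 L
    refine le_trans (le_of_eq ?_) this
    refine Finset.sum_congr rfl fun v _ => ?_
    simp [Set.indicator_apply, hB, hh]
  have hBI : ∀ v, Integrable ((B v).indicator (fun _ => (1:ℝ))) μ := fun v =>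
    (integrable_const _).indicator (hBm v)
  have hint : ∑ v : Fin L → I, (∏ j, w (v j)) * μ.real (B v) ≤ 4 * exp (-(L * t ^ 2 / 256)) := by
    have e : ∑ v : Fin L → I, (∏ j, w (v j)) * μ.real (B v) =
        ∫ y, ∑ v : Fin L → I, (∏ j, w (v j)) * (B v).indicator (fun _ => (1:ℝ)) y ∂μ := by
      rw [integral_finsetSum _ fun v _ => (hBI v).const_mul _]
      refine Finset.sum_congr rfl fun v _ => ?_
      rw [integral_const_mul, integral_indicator (hBm v)]
      simp
    rw [e]
    calc _ ≤ ∫ y, 4 * exp (-(L * t ^ 2 / 256)) ∂μ :=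
          integral_mono (integrable_finsetSum _ fun v _ => (hBI v).const_mul _)
            (integrable_const _) htail
      _ = _ := by simp
  have hsamp : ∑ v : Fin L → I, (∏ j, w (v j)) * ((univ.filter fun i => x i ∈ B v).card : ℝ) ≤
      n * (4 * exp (-(L * t ^ 2 / 256))) := by
    calc _ = ∑ v : Fin L → I, ∑ i, (∏ j, w (v j)) * (B v).indicator (fun _ => (1:ℝ)) (x i) := by
          refine Finset.sum_congr rfl fun v _ => ?_
          rw [← Finset.mul_sum]
          congr 1
          simp [Set.indicator_apply]
      _ = ∑ i, ∑ v : Fin L → I, (∏ j, w (v j)) * (B v).indicator (fun _ => (1:ℝ)) (x i) :=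
          Finset.sum_comm
      _ ≤ ∑ i : Fin n, 4 * exp (-(L * t ^ 2 / 256)) := Finset.sum_le_sum fun i _ => htail _
      _ = _ := by simp
  have hW : ∑ v : Fin L → I, ∏ j, w (v j) = 1 := by
    rw [← Fintype.sum_pow, hw1, one_pow]
  obtain ⟨v, hv⟩ : ∃ v : Fin L → I, n * μ.real (B v) +
      ((univ.filter fun i => x i ∈ B v).card : ℝ) < n * (m / 8) := by
    by_contra hc
    push Not at hc
    have : n * (m / 8) ≤ ∑ v : Fin L → I, (∏ j, w (v j)) * (n * μ.real (B v) +
      ((univ.filter fun i => x i ∈ B v).card : ℝ)) := by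
      calc n * (m/8) = ∑ v : Fin L → I, (∏ j, w (v j)) * (n * (m/8)) := by
            rw [← Finset.sum_mul, hW, one_mul]
        _ ≤ _ := Finset.sum_le_sum fun v _ =>
            mul_le_mul_of_nonneg_left (hc v) (Finset.prod_nonneg fun j _ => hw _)
    have e : ∑ v : Fin L → I, (∏ j, w (v j)) * (n * μ.real (B v) +
      ((univ.filter fun i => x i ∈ B v).card : ℝ)) =
       n * (∑ v : Fin L → I, (∏ j, w (v j)) * μ.real (B v)) +
       ∑ v : Fin L → I, (∏ j, w (v j)) * ((univ.filter fun i => x i ∈ B v).card : ℝ) := by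
      rw [Finset.mul_sum, ← Finset.sum_add_distrib]
      refine Finset.sum_congr rfl fun v _ => by ring
    rw [e] at this
    nlinarith
  have hb1 : μ.real (B v) < m / 8 := by
    have : (n:ℝ) * μ.real (B v) < n * (m/8) := by
      have : (0:ℝ) ≤ ((univ.filter fun i => x i ∈ B v).card : ℝ) := Nat.cast_nonneg _
      linarith
    exact lt_of_mul_lt_mul_left this hn0.le
  have hb2 : ((univ.filter fun i => x i ∈ B v).card : ℝ) < n * (m/8) := by
    have : (0:ℝ) ≤ n * μ.real (B v) := by positivity
    linarith
  have hsub : {y | t ≤ ‖h y‖} ⊆ {y | L * (3 * t / 4) ≤ ‖∑ j, g (v j) y‖} ∪ B v := by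
    intro y hy
    by_contra hc
    simp only [Set.mem_union, Set.mem_ofPred_eq, hB, not_or, not_le] at hc hy
    have h1 : ‖(L:ℂ) * h y‖ = L * ‖h y‖ := by simp
    have h2 := norm_sub_norm_le ((L:ℂ) * h y) (∑ j, g (v j) y)
    rw [norm_sub_rev, h1] at h2
    nlinarith [hc.1, hc.2]
  have hE : m / 2 ≤ μ.real {y | L * (3 * t / 4) ≤ ‖∑ j, g (v j) y‖} := by
    have := (measureReal_mono hsub (measure_ne_top _ _)).trans (measureReal_union_le (μ := μ) _ _)
    linarith
  have hhit := hx v hE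
  obtain ⟨i, hi1, hi2⟩ : ∃ i, x i ∈ {y | L * (3 * t / 4) ≤ ‖∑ j, g (v j) y‖} ∧ x i ∉ B v := by
    by_contra hc
    push Not at hc
    have : (univ.filter fun i => x i ∈ {y | L * (3 * t / 4) ≤ ‖∑ j, g (v j) y‖}).card ≤
      (univ.filter fun i => x i ∈ B v).card := by
      refine Finset.card_le_card fun i hi => ?_
      simp only [mem_filter, mem_univ, true_and] at hi ⊢
      exact hc i hi
    have : ((univ.filter fun i => x i ∈ {y | L * (3 * t / 4) ≤ ‖∑ j, g (v j) y‖}).card : ℝ) ≤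
      (univ.filter fun i => x i ∈ B v).card := by exact_mod_cast this
    linarith
  simp only [Set.mem_ofPred_eq, hB, not_le] at hi1 hi2
  have h1 : ‖(L:ℂ) * h (x i)‖ = L * ‖h (x i)‖ := by simp
  have h2 := norm_sub_norm_le (∑ j, g (v j) (x i)) ((L:ℂ) * h (x i))
  rw [h1] at h2
  have h3 : ‖h (x i)‖ ≤ t / 2 := hsmall i
  nlinarith

lemma layer (a : ℝ) (ha0 : 0 ≤ a) (ha : a ≤ 1) (J : ℕ) :
    a ^ 2 ≤ (1/4 : ℝ) ^ J + ∑ j ∈ Finset.range J,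
      (1/4 : ℝ) ^ j * (if (1/2 : ℝ) ^ (j+1) ≤ a then 1 else 0) := by
  induction J with
  | zero => simpa using abs_le.mpr ⟨by linarith, ha⟩
  | succ J ih =>
    rw [Finset.sum_range_succ]
    have e : ((1/2:ℝ)^(J+1))^2 = (1/4)^(J+1) := by rw [← pow_mul, mul_comm, pow_mul]; norm_num
    have hp : (0:ℝ) < (1/4)^(J+1) := by positivity
    split_ifs with h
    · linarith
    · have : a ^ 2 ≤ (1/4 : ℝ)^(J+1) := by
        rw [← e]; exact pow_le_pow_left₀ ha0 (not_le.mp h).le 2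
      have h2 : (0:ℝ) ≤ ∑ j ∈ Finset.range J,
        (1/4 : ℝ) ^ j * (if (1/2 : ℝ) ^ (j+1) ≤ a then 1 else 0) :=
        Finset.sum_nonneg fun j _ => mul_nonneg (by positivity) (by split_ifs <;> norm_num)
      linarith

lemma abstract_main {X I : Type*} [MeasurableSpace X] (μ : Measure X) [IsProbabilityMeasure μ]
    (S : Set X) (hS : μ Sᶜ = 0) [Fintype I] [Nonempty I] (g : I → X → ℂ)
    (hg : ∀ i, Measurable (g i))
    (hg1 : ∀ i x, ‖g i x‖ ≤ 1) (J n : ℕ) (hJ : 1 ≤ J)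
    (hn : 20480 * (J:ℝ) ^ 2 * 4 ^ J * log (Fintype.card I) < n) :
    ∃ x : Fin J × Fin n → X, (∀ i, x i ∈ S) ∧ ∀ w : I → ℝ, (∀ i, 0 ≤ w i) → ∑ i, w i = 1 →
      (∀ j, ‖∑ i, (w i : ℂ) * g i (x j)‖ ≤ (1/2) ^ (J+1)) →
        ∫ y, ‖∑ i, (w i : ℂ) * g i y‖ ^ 2 ∂μ ≤ 5 * (1/4) ^ J := by
  have hJ0 : (1:ℝ) ≤ J := by exact_mod_cast hJ
  have hlev : ∀ j : Fin J, ∃ x : Fin n → X, (∀ i, x i ∈ S) ∧ ∀ w : I → ℝ, (∀ i, 0 ≤ w i) →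
      ∑ i, w i = 1 → (∀ k, ‖∑ i, (w i : ℂ) * g i (x k)‖ ≤ (1/2) ^ ((j:ℕ)+1) / 2) →
        μ.real {y | (1/2) ^ ((j:ℕ)+1) ≤ ‖∑ i, (w i : ℂ) * g i y‖} ≤ 4 ^ ((j:ℕ)+1) / 4 ^ J / J := by
    intro j
    have h4 : (4:ℝ) ^ ((j:ℕ)+1) ≤ 4 ^ J := pow_le_pow_right₀ (by norm_num) j.2
    refine level μ S hS g hg hg1 _ _ (by positivity) (pow_le_one₀ (by norm_num) (by norm_num))
      (by positivity) ?_ (2560 * J * 4 ^ ((j:ℕ)+1)) n ?_ ?_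
    · rw [div_div, div_le_one (by positivity)]
      nlinarith [show (0:ℝ) < 4 ^ J by positivity]
    · have e : ((2560 * J * 4 ^ ((j:ℕ)+1) : ℕ) : ℝ) * ((1/2) ^ ((j:ℕ)+1)) ^ 2 / 256 = 10 * J := by
        push_cast
        rw [← pow_mul, mul_comm ((j:ℕ)+1) 2, pow_mul]
        have : (4:ℝ) ^ ((j:ℕ)+1) * ((1/2)^2) ^ ((j:ℕ)+1) = 1 := by
          rw [← mul_pow]; norm_num
        linear_combination (2560 * (J:ℝ) / 256) * this
      rw [e, exp_neg, div_div, ← div_eq_mul_inv, div_lt_div_iff₀ (exp_pos _) (by positivity)]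
      have h1 : (1024:ℝ) ^ J ≤ exp (10 * J) := by
        calc (1024:ℝ) ^ J = (2 ^ 10) ^ J := by norm_num
          _ ≤ (exp 1 ^ 10) ^ J := by
            gcongr
            linarith [Real.add_one_le_exp (1:ℝ)]
          _ = _ := by rw [← exp_nat_mul, ← exp_nat_mul]; push_cast; ring_nf
      have h2 : (J:ℝ) < 2 ^ J := by exact_mod_cast Nat.lt_two_pow_self
      have h3 : (64:ℝ) < 128 ^ J := by
        calc (64:ℝ) < 128 ^ 1 := by norm_num
          _ ≤ _ := pow_le_pow_right₀ (by norm_num) hJ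
      have h5 : (1:ℝ) ≤ 4 ^ ((j:ℕ)+1) := one_le_pow₀ (by norm_num)
      calc (64:ℝ) * (4 ^ J * J) < 128 ^ J * (4 ^ J * 2 ^ J) := by gcongr
        _ = 1024 ^ J := by rw [← mul_pow, ← mul_pow]; norm_num
        _ ≤ exp (10 * J) := h1
        _ ≤ _ := le_mul_of_one_le_left (exp_pos _).le h5
    · have hc : (0:ℝ) < Fintype.card I := by exact_mod_cast Fintype.card_pos
      rw [← Real.exp_log (pow_pos hc _), exp_lt_exp, Real.log_pow]
      push_cast
      have e : (4:ℝ) ^ ((j:ℕ)+1) / 4 ^ J / J * n / 8 = 4 ^ ((j:ℕ)+1) * (n / (8 * J * 4 ^ J)) := by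
        field_simp
      rw [e, mul_assoc, mul_comm (2560 * (J:ℝ)), mul_assoc]
      refine mul_lt_mul_of_pos_left ?_ (by positivity)
      rw [lt_div_iff₀ (by positivity)]
      linarith
  choose x hxS hx using hlev
  refine ⟨fun p => x p.1 p.2, fun p => hxS _ _, fun w hw hw1 hs => ?_⟩
  set h : X → ℂ := fun y => ∑ i, (w i : ℂ) * g i y with hh
  have hhm : Measurable h := Finset.measurable_sum _ fun i _ => (hg i).const_mul _
  have hh1 : ∀ y, ‖h y‖ ≤ 1 := by
    intro y
    calc ‖h y‖ ≤ ∑ i, ‖(w i : ℂ) * g i y‖ := norm_sum_le _ _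
      _ ≤ ∑ i, w i := by
        refine Finset.sum_le_sum fun i _ => ?_
        rw [norm_mul, Complex.norm_real, Real.norm_of_nonneg (hw i)]
        exact mul_le_of_le_one_right (hw i) (hg1 i y)
      _ = 1 := hw1
  have hmj : ∀ j : ℕ, MeasurableSet {y | (1/2:ℝ) ^ (j+1) ≤ ‖h y‖} := fun j =>
    measurableSet_le measurable_const hhm.norm
  have hIj : ∀ j : ℕ, Integrable ({y | (1/2:ℝ) ^ (j+1) ≤ ‖h y‖}.indicator (fun _ => (1:ℝ))) μ :=
    fun j => (integrable_const _).indicator (hmj j)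
  have hbd : ∀ j ∈ Finset.range J, μ.real {y | (1/2:ℝ) ^ (j+1) ≤ ‖h y‖} ≤ 4 ^ (j+1) / 4 ^ J / J := by
    intro j hj
    rw [Finset.mem_range] at hj
    refine hx ⟨j, hj⟩ w hw hw1 fun k => (hs (⟨j, hj⟩, k)).trans ?_
    have : (1/2:ℝ) ^ J ≤ (1/2) ^ (j+1) := pow_le_pow_of_le_one (by norm_num) (by norm_num) hj
    rw [pow_succ]
    simp only
    linarith
  calc ∫ y, ‖h y‖ ^ 2 ∂μ ≤ ∫ y, ((1/4 : ℝ) ^ J + ∑ j ∈ Finset.range J,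
      (1/4 : ℝ) ^ j * {y | (1/2:ℝ) ^ (j+1) ≤ ‖h y‖}.indicator (fun _ => (1:ℝ)) y) ∂μ := by
        refine integral_mono ?_ ?_ ?_
        · refine Integrable.of_bound (hhm.norm.pow_const 2).aestronglyMeasurable 1
            (Filter.Eventually.of_forall fun y => ?_)
          rw [Real.norm_of_nonneg (by positivity)]
          exact pow_le_one₀ (norm_nonneg _) (hh1 y)
        · exact (integrable_const _).add (integrable_finsetSum _ fun j _ => (hIj j).const_mul _)
        · intro y
          have := layer ‖h y‖ (norm_nonneg _) (hh1 y) J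
          simpa [Set.indicator_apply] using this
    _ = (1/4 : ℝ) ^ J + ∑ j ∈ Finset.range J,
      (1/4 : ℝ) ^ j * μ.real {y | (1/2:ℝ) ^ (j+1) ≤ ‖h y‖} := by
        rw [integral_add (integrable_const _)
          (integrable_finsetSum _ fun j _ => (hIj j).const_mul _),
          integral_finsetSum _ fun j _ => (hIj j).const_mul _]
        congr 1
        · simp
        · refine Finset.sum_congr rfl fun j _ => ?_
          rw [integral_const_mul, integral_indicator (hmj j)]
          simp
    _ ≤ (1/4 : ℝ) ^ J + ∑ j ∈ Finset.range J, (1/4 : ℝ) ^ j * (4 ^ (j+1) / 4 ^ J / J) := by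
        gcongr with j hj
        exact hbd j hj
    _ = (1/4 : ℝ) ^ J + ∑ j ∈ Finset.range J, 4 * (1/4 : ℝ)^J / (J : ℝ) := by
        congr 1
        refine Finset.sum_congr rfl fun j _ => ?_
        have : (1/4:ℝ)^j * 4^j = 1 := by rw [← mul_pow]; norm_num
        have h4 : (1/4:ℝ)^J = 1 / 4 ^ J := by rw [one_div_pow]
        rw [pow_succ, h4]
        calc _ = ((1/4:ℝ)^j * 4^j) * (4 * (1 / 4 ^ J) / J) := by ring
          _ = _ := by rw [this, one_mul]
    _ = _ := by
        rw [Finset.sum_const, Finset.card_range, nsmul_eq_mul]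
        field_simp
        ring

lemma cube_ae (d : ℕ) : (volume : Measure (Fin d → ℝ)).restrict (cube d) =
    volume.restrict {x : Fin d → ℝ | ∀ i, x i ∈ Set.Ioc ((0 : Fin d → ℝ) i) ((0 : Fin d → ℝ) i + 1)} := by
  have h : {x : Fin d → ℝ | ∀ i, x i ∈ Set.Ioc ((0 : Fin d → ℝ) i) ((0 : Fin d → ℝ) i + 1)} =
      Set.univ.pi fun _ => Set.Ioc (0:ℝ) 1 := by
    ext x; simp
  rw [h, cube, volume_pi, Measure.restrict_pi_pi, Measure.restrict_pi_pi]
  congr 1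
  ext1 i
  exact (Measure.restrict_congr_set Ioc_ae_eq_Icc).symm

instance cube_prob (d : ℕ) : IsProbabilityMeasure ((volume : Measure (Fin d → ℝ)).restrict (cube d)) := by
  constructor
  rw [Measure.restrict_apply_univ, cube, volume_pi, Measure.pi_pi]
  simp

lemma periodic_all {d : ℕ} {f : (Fin d → ℝ) → ℂ} (hf : Periodic1 d f) (x y : Fin d → ℝ)
    (h : ∀ i, ((x i : ℝ) : UnitAddCircle) = (y i : ℝ)) : f x = f y := by
  have h1 : ∀ i, ∃ n : ℤ, y i = x i + n := by
    intro i
    obtain ⟨n, hn⟩ := (QuotientAddGroup.eq_iff_sub_mem.mp (h i).symm)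
    refine ⟨n, ?_⟩
    simp at hn
    linarith
  choose n hn using h1
  have hper : ∀ i, Function.Periodic f (Pi.single i (1:ℝ)) := by
    intro i z
    rw [← hf z i]
    congr 1
    ext j
    by_cases hj : j = i
    · subst hj; simp
    · simp [hj]
  have hsum : ∀ s : Finset (Fin d), Function.Periodic f (∑ i ∈ s, n i • Pi.single i (1:ℝ)) := by
    intro s
    induction s using Finset.induction_on with
    | empty => intro z; simp
    | insert a s ha ih =>
      rw [Finset.sum_insert ha]
      exact ((hper a).zsmul (n a)).add_period ih
  have : y = x + ∑ i, n i • Pi.single i (1:ℝ) := by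
    ext j
    rw [hn j]
    simp [Finset.sum_apply, Pi.single_apply]
  rw [this]
  exact (hsum univ x).symm

lemma mF_eq {d : ℕ} (k : Fin d → ℤ) (x : Fin d → ℝ) :
    UnitAddTorus.mFourier k (fun i => ((x i : ℝ) : UnitAddCircle)) = eK d k x := by
  simp only [UnitAddTorus.mFourier, ContinuousMap.coe_mk, fourier_coe_apply, eK]
  rw [← Complex.exp_sum, Finset.mul_sum]
  congr 1
  refine Finset.sum_congr rfl fun i _ => ?_
  simp; ring

lemma fourier_inv {d : ℕ} {f : (Fin d → ℝ) → ℂ} (hc : Continuous f) (hp : Periodic1 d f)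
    (hs : Summable fun k => ‖fCoeff d f k‖) (x : Fin d → ℝ) :
    HasSum (fun k => fCoeff d f k * eK d k x) (f x) := by
  have hq : IsOpenQuotientMap (Pi.map fun (_ : Fin d) (x : ℝ) => (x : UnitAddCircle)) :=
    IsOpenQuotientMap.piMap fun _ => QuotientAddGroup.isOpenQuotientMap_mk
  set q : (Fin d → ℝ) → UnitAddTorus (Fin d) := Pi.map fun (_ : Fin d) (x : ℝ) => (x : UnitAddCircle) with hqd
  set F0 : UnitAddTorus (Fin d) → ℂ := fun y => f (Function.surjInv hq.surjective y) with hF0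
  have hF : ∀ x, F0 (q x) = f x := by
    intro x
    refine periodic_all hp _ _ fun i => ?_
    have := Function.surjInv_eq hq.surjective (q x)
    exact congrFun this i
  have hF0c : Continuous F0 := by
    rw [← hq.continuous_comp_iff]
    have : F0 ∘ q = f := funext hF
    exact this ▸ hc
  set F : C(UnitAddTorus (Fin d), ℂ) := ⟨F0, hF0c⟩ with hFd
  have hco : ∀ k, UnitAddTorus.mFourierCoeff F k = fCoeff d f k := by
    intro k
    rw [UnitAddTorus.mFourierCoeff_eq_integral F k 0, fCoeff, cube_ae]
    congr 1
    ext x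
    rw [mF_eq]
    have h1 : F (fun i => ((x i : ℝ) : UnitAddCircle)) = f x := hF x
    rw [h1, smul_eq_mul, mul_comm, eK]
    congr 2
    simp
  have hs' : Summable (UnitAddTorus.mFourierCoeff F) := by
    refine Summable.of_norm ?_
    simpa only [hco] using hs
  have := UnitAddTorus.hasSum_mFourier_series_apply_of_summable hs' (q x)
  have h1 : F (q x) = f x := hF x
  rw [h1] at this
  refine this.congr_fun fun k => ?_
  rw [hco, smul_eq_mul]
  congr 1
  exact (mF_eq k x).symm

lemma eK_norm (d : ℕ) (k : Fin d → ℤ) (x : Fin d → ℝ) : ‖eK d k x‖ = 1 := by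
  have : (2 * Real.pi * Complex.I * ∑ i, (k i : ℂ) * (x i : ℂ)) =
    ((2 * Real.pi * ∑ i, (k i : ℝ) * (x i : ℝ) : ℝ) : ℂ) * Complex.I := by
    push_cast; ring
  rw [eK, this, Complex.norm_exp_ofReal_mul_I]

lemma eK_meas (d : ℕ) (k : Fin d → ℤ) : Measurable (eK d k) := by
  unfold eK
  fun_prop

def dict {K X : Type*} (e : K → X → ℂ) : Option (K × Fin 4) → X → ℂ
  | none => fun _ => 0
  | some (k, s) => fun x => Complex.I ^ (s : ℕ) * e k x

lemma dict_main {X K : Type*} [MeasurableSpace X] (μ : Measure X) [IsProbabilityMeasure μ]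
    (S : Set X) (hS : μ Sᶜ = 0) [Fintype K] (e : K → X → ℂ)
    (he : ∀ i, Measurable (e i))
    (he1 : ∀ i x, ‖e i x‖ ≤ 1) (J n : ℕ) (hJ : 1 ≤ J)
    (hn : 20480 * (J:ℝ) ^ 2 * 4 ^ J * log (Fintype.card K * 4 + 1) < n) :
    ∃ x : Fin J × Fin n → X, (∀ i, x i ∈ S) ∧ ∀ c : K → ℂ, ∑ i, ‖c i‖ ≤ 2 →
      (∀ j, ‖∑ i, c i * e i (x j)‖ ≤ 2 * (1/2) ^ J) →
        ∫ y, ‖∑ i, c i * e i y‖ ^ 2 ∂μ ≤ 80 * (1/4) ^ J := by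
  obtain ⟨x, hxS, hx⟩ := abstract_main μ S hS (dict e)
    (by
      rintro (_ | ⟨k, s⟩)
      · exact measurable_const
      · exact (he k).const_mul _)
    (by
      rintro (_ | ⟨k, s⟩) x
      · simp [dict]
      · simpa [dict] using he1 k x) J n hJ (by simpa using hn)
  refine ⟨x, hxS, fun c hc hs => ?_⟩
  set w0 : K → Fin 4 → ℝ := fun k s =>
    ![max (c k).re 0, max (c k).im 0, max (-(c k).re) 0, max (-(c k).im) 0] s / 4 with hw0
  have hw0n : ∀ k s, 0 ≤ w0 k s := by
    intro k s
    fin_cases s <;> simp [hw0] <;> positivity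
  have hm : ∀ r : ℝ, max r 0 + max (-r) 0 = |r| := by
    intro r
    rcases le_total 0 r with h | h
    · rw [max_eq_left h, max_eq_right (by linarith), abs_of_nonneg h]; ring
    · rw [max_eq_right h, max_eq_left (by linarith), abs_of_nonpos h]; ring
  have hm2 : ∀ r : ℝ, max r 0 - max (-r) 0 = r := by
    intro r
    rcases le_total 0 r with h | h
    · rw [max_eq_left h, max_eq_right (by linarith)]; ring
    · rw [max_eq_right h, max_eq_left (by linarith)]; ring
  have hw0s : ∑ k, ∑ s, w0 k s ≤ 1 := by
    calc ∑ k, ∑ s, w0 k s ≤ ∑ k, ‖c k‖ / 2 := by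
          refine Finset.sum_le_sum fun k _ => ?_
          have h1 := hm (c k).re
          have h2 := hm (c k).im
          have h3 := Complex.abs_re_le_norm (c k)
          have h4 := Complex.abs_im_le_norm (c k)
          simp only [hw0, Fin.sum_univ_four, Matrix.cons_val]
          linarith
      _ ≤ 1 := by rw [← Finset.sum_div]; linarith
  set w : Option (K × Fin 4) → ℝ := fun o => o.elim (1 - ∑ k, ∑ s, w0 k s) (fun p => w0 p.1 p.2) with hw
  have hwn : ∀ o, 0 ≤ w o := by
    rintro (_ | p)
    · simp [hw]; exact hw0s
    · exact hw0n _ _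
  have hw1 : ∑ o, w o = 1 := by
    rw [Fintype.sum_option, Fintype.sum_prod_type]
    simp [hw]
  have hI : ∀ y, ∑ o, (w o : ℂ) * dict e o y = (1/4) * ∑ i, c i * e i y := by
    intro y
    rw [Fintype.sum_option, Fintype.sum_prod_type, Finset.mul_sum]
    simp only [hw, dict, mul_zero, zero_add, Option.elim]
    refine Finset.sum_congr rfl fun k _ => ?_
    have h1 : (((max (c k).re 0 : ℝ) : ℂ) - ((max (-(c k).re) 0 : ℝ) : ℂ)) + (((max (c k).im 0 : ℝ):ℂ) - ((max (-(c k).im) 0 : ℝ):ℂ)) * Complex.I = c k := by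
      rw [← Complex.ofReal_sub, ← Complex.ofReal_sub, hm2, hm2]
      exact Complex.re_add_im _
    simp only [hw0, Fin.sum_univ_four, Matrix.cons_val]
    have hI3 : Complex.I ^ 3 = - Complex.I := Complex.I_pow_three
    simp [Complex.I_sq, hI3]
    linear_combination (e k y / 4) * h1
  have key := hx w hwn hw1 (by
    intro j
    rw [hI, norm_mul]
    have := hs j
    have e1 : ‖(1/4 : ℂ)‖ = 1/4 := by norm_num
    rw [e1, pow_succ]
    linarith)
  simp only [hI, norm_mul, mul_pow, integral_const_mul] at key
  have e1 : ‖(1/4 : ℂ)‖ = 1/4 := by norm_num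
  rw [e1] at key
  linarith

lemma one_le_logWeight (d : ℕ) (k : Fin d → ℤ) : 1 ≤ logWeight d k := le_max_left _ _

lemma FdLog_hasSum {d : ℕ} {f : (Fin d → ℝ) → ℂ} (hf : f ∈ FdLog d) :
    Summable (fun k => ‖fCoeff d f k‖) ∧ ∀ x, HasSum (fun k => fCoeff d f k * eK d k x) (f x) := by
  have hs : Summable (fun k => ‖fCoeff d f k‖) := by
    refine Summable.of_nonneg_of_le (fun _ => norm_nonneg _) (fun k => ?_) hf.2.2.1
    exact le_mul_of_one_le_right (norm_nonneg _) (one_le_logWeight d k)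
  exact ⟨hs, fourier_inv hf.1 hf.2.1 hs⟩

lemma core (d J n : ℕ) (hJ : 1 ≤ J) (M : ℕ) (hM : exp (2 ^ J) ≤ M)
    (hn : 20480 * (J:ℝ) ^ 2 * 4 ^ J * log (((2 * M + 1 : ℕ) : ℝ) ^ d * 4 + 1) < n) :
    ∃ x : Fin J × Fin n → (Fin d → ℝ), (∀ i, x i ∈ cube d) ∧ ∀ f ∈ FdLog d, ∀ f' ∈ FdLog d,
      (∀ i, f (x i) = f' (x i)) → (∀ y, ‖f y - f' y‖ ≤ 2) ∧
        ∫ y in cube d, ‖f y - f' y‖ ^ 2 ≤ 168 * (1/4) ^ J := by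
  set Λ : Finset (Fin d → ℤ) := Fintype.piFinset fun _ => Finset.Icc (-(M:ℤ)) M with hΛ
  have hcard : Fintype.card Λ = (2 * M + 1) ^ d := by
    rw [Fintype.card_coe, hΛ, Fintype.card_piFinset]
    simp
    congr 1
    omega
  have hmc : MeasurableSet (cube d) := MeasurableSet.univ_pi fun _ => measurableSet_Icc
  obtain ⟨x, hxS, hx⟩ := dict_main ((volume : Measure (Fin d → ℝ)).restrict (cube d)) (cube d)
    (by rw [Measure.restrict_apply hmc.compl]; simp) (fun (k : Λ) y => eK d k y)
    (fun k => eK_meas d k) (fun k y => (eK_norm d k y).le) J n hJ (by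
      rw [hcard]; push_cast at hn ⊢; exact hn)
  refine ⟨x, hxS, fun f hf f' hf' heq => ?_⟩
  obtain ⟨hs, hfs⟩ := FdLog_hasSum hf
  obtain ⟨hs', hfs'⟩ := FdLog_hasSum hf'
  set c : (Fin d → ℤ) → ℂ := fun k => fCoeff d f k - fCoeff d f' k with hc
  set b : (Fin d → ℤ) → ℝ := fun k => ‖fCoeff d f k‖ * logWeight d k + ‖fCoeff d f' k‖ * logWeight d k with hb
  have hbS : HasSum b (∑' k, ‖fCoeff d f k‖ * logWeight d k + ∑' k, ‖fCoeff d f' k‖ * logWeight d k) :=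
    hf.2.2.1.hasSum.add hf'.2.2.1.hasSum
  have hb2 : ∑' k, ‖fCoeff d f k‖ * logWeight d k + ∑' k, ‖fCoeff d f' k‖ * logWeight d k ≤ 2 := by
    linarith [hf.2.2.2, hf'.2.2.2]
  set β := ∑' k, ‖fCoeff d f k‖ * logWeight d k + ∑' k, ‖fCoeff d f' k‖ * logWeight d k with hβ
  have hcb : ∀ k, ‖c k‖ * logWeight d k ≤ b k := by
    intro k
    have e : b k = (‖fCoeff d f k‖ + ‖fCoeff d f' k‖) * logWeight d k := by
      simp only [hb]; ring
    rw [e]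
    exact mul_le_mul_of_nonneg_right (norm_sub_le _ _) (by linarith [one_le_logWeight d k])
  have hcb1 : ∀ k, ‖c k‖ ≤ b k := fun k =>
    (le_mul_of_one_le_right (norm_nonneg _) (one_le_logWeight d k)).trans (hcb k)
  have hb0 : ∀ k, 0 ≤ b k := fun k => (norm_nonneg _).trans (hcb1 k)
  have hg : ∀ y, HasSum (fun k => c k * eK d k y) (f y - f' y) := by
    intro y
    refine ((hfs y).sub (hfs' y)).congr_fun fun k => ?_
    simp only [hc]; ring
  have hg2 : ∀ y, ‖f y - f' y‖ ≤ 2 := by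
    intro y
    refine ((hg y).norm_le_of_bounded hbS fun k => ?_).trans hb2
    rw [norm_mul, eK_norm, mul_one]; exact hcb1 k
  refine ⟨hg2, ?_⟩
  have hout : ∀ k, k ∉ Λ → (2:ℝ) ^ J ≤ logWeight d k := by
    intro k hk
    have : ∃ i, k i < -(M:ℤ) ∨ (M:ℤ) < k i := by
      by_contra hcon
      push Not at hcon
      apply hk
      rw [hΛ, Fintype.mem_piFinset]
      intro i
      rw [Finset.mem_Icc]
      exact hcon i
    obtain ⟨i, hi⟩ := this
    have h1 : M ≤ (k i).natAbs := by omega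
    have h2 : M ≤ Finset.univ.sup fun i => (k i).natAbs :=
      h1.trans (Finset.le_sup (f := fun i => (k i).natAbs) (Finset.mem_univ i))
    refine le_trans ?_ (le_max_right _ _)
    rw [Real.le_log_iff_exp_le]
    · exact hM.trans (by exact_mod_cast h2)
    · have : (0:ℝ) < M := (exp_pos _).trans_le hM
      exact this.trans_le (by exact_mod_cast h2)
  have htail : ∀ y, ‖(f y - f' y) - ∑ k : Λ, c k * eK d k y‖ ≤ 2 * (1/2) ^ J := by
    intro y
    have e1 : ∑ k : Λ, c k * eK d k y = ∑ k ∈ Λ, c k * eK d k y :=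
      Finset.sum_coe_sort Λ fun k => c k * eK d k y
    have h1 : HasSum (fun k => if k ∈ Λ then c k * eK d k y else 0) (∑ k ∈ Λ, c k * eK d k y) := by
      have := hasSum_sum_of_ne_finset_zero (L := SummationFilter.unconditional _) (f := fun k => if k ∈ Λ then c k * eK d k y else 0)
        (s := Λ) (fun k hk => by simp [hk])
      rwa [Finset.sum_congr rfl (fun k hk => if_pos hk)] at this
    rw [e1]
    have h2 := ((hg y).sub h1).norm_le_of_bounded (hbS.mul_left ((1/2:ℝ)^J)) (fun k => by
      by_cases hk : k ∈ Λ
      · simp only [hk, if_true, sub_self, norm_zero]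
        exact mul_nonneg (by positivity) (hb0 k)
      · simp only [hk, if_false, sub_zero, norm_mul, eK_norm, mul_one]
        have h3 := hout k hk
        have h4 := hcb k
        have h5 : ‖c k‖ * 2 ^ J ≤ b k := (mul_le_mul_of_nonneg_left h3 (norm_nonneg _)).trans h4
        rw [one_div_pow, one_div, inv_mul_eq_div, le_div_iff₀ (by positivity)]
        exact h5)
    refine h2.trans ?_
    rw [mul_comm]
    gcongr
  have hsum2 : ∑ k : Λ, ‖c k‖ ≤ 2 := by
    rw [Finset.sum_coe_sort Λ fun k => ‖c k‖]
    calc ∑ k ∈ Λ, ‖c k‖ ≤ ∑ k ∈ Λ, b k := Finset.sum_le_sum fun k _ => hcb1 k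
      _ ≤ β := sum_le_hasSum _ (fun k _ => hb0 k) hbS
      _ ≤ 2 := hb2
  have hmain := hx (fun k : Λ => c k) hsum2 (by
    intro j
    have := htail (x j)
    rwa [heq j, sub_self, zero_sub, norm_neg] at this)
  have hm0 : Measurable fun y => ∑ k : Λ, c k * eK d k y :=
    Finset.measurable_sum _ fun k _ => (eK_meas d k).const_mul _
  have hbd0 : ∀ y, ‖∑ k : Λ, c k * eK d k y‖ ≤ 2 := by
    intro y
    refine (norm_sum_le _ _).trans ?_
    simpa [norm_mul, eK_norm] using hsum2
  have hint0 : Integrable (fun y => ‖∑ k : Λ, c k * eK d k y‖ ^ 2) (volume.restrict (cube d)) := by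
    refine Integrable.of_bound (hm0.norm.pow_const 2).aestronglyMeasurable 4
      (Filter.Eventually.of_forall fun y => ?_)
    rw [Real.norm_of_nonneg (by positivity)]
    nlinarith [hbd0 y, norm_nonneg (∑ k : Λ, c k * eK d k y)]
  have hint1 : Integrable (fun y => ‖f y - f' y‖ ^ 2) (volume.restrict (cube d)) := by
    refine Integrable.of_bound (((hf.1.sub hf'.1).norm.pow 2).measurable).aestronglyMeasurable 4
      (Filter.Eventually.of_forall fun y => ?_)
    rw [Real.norm_of_nonneg (by positivity)]
    nlinarith [hg2 y, norm_nonneg (f y - f' y)]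
  calc ∫ y in cube d, ‖f y - f' y‖ ^ 2
      ≤ ∫ y in cube d, (2 * ‖∑ k : Λ, c k * eK d k y‖ ^ 2 + 8 * (1/4) ^ J) := by
        refine integral_mono hint1 ((hint0.const_mul 2).add (integrable_const _)) fun y => ?_
        have h1 := htail y
        have h2 := norm_le_norm_add_norm_sub (∑ k : Λ, c k * eK d k y) (f y - f' y)
        rw [norm_sub_rev (∑ k : Λ, c k * eK d k y) (f y - f' y)] at h2
        have h3 : ((1/2:ℝ)^J)^2 = (1/4)^J := by rw [← pow_mul, mul_comm, pow_mul]; norm_num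
        have h4 : ‖f y - f' y‖ ≤ ‖∑ k : Λ, c k * eK d k y‖ + 2 * (1/2)^J := by linarith
        have h5 := pow_le_pow_left₀ (norm_nonneg _) h4 2
        simp only
        rw [← h3]
        nlinarith [sq_nonneg (‖∑ k : Λ, c k * eK d k y‖ - 2 * (1/2)^J)]
    _ = 2 * (∫ y in cube d, ‖∑ k : Λ, c k * eK d k y‖ ^ 2) + 8 * (1/4) ^ J := by
        rw [integral_add (hint0.const_mul 2) (integrable_const _), integral_const_mul]
        simp
    _ ≤ _ := by linarith

lemma core2 (d J : ℕ) (hd : 1 ≤ d) (hJ : 1 ≤ J) :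
    ∃ n : ℕ, (n : ℝ) ≤ 270000 * d * J ^ 3 * 8 ^ J ∧
    ∃ x : Fin n → (Fin d → ℝ), (∀ i, x i ∈ cube d) ∧ ∀ f ∈ FdLog d, ∀ f' ∈ FdLog d,
      (∀ i, f (x i) = f' (x i)) → (∀ y, ‖f y - f' y‖ ≤ 2) ∧
        ∫ y in cube d, ‖f y - f' y‖ ^ 2 ≤ 168 * (1/4) ^ J := by
  set n₁ : ℕ := 266240 * d * J ^ 2 * 8 ^ J + 1 with hn1
  set M : ℕ := ⌈exp (2 ^ J)⌉₊ with hM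
  have hJr : (1:ℝ) ≤ J := by exact_mod_cast hJ
  have hdr : (1:ℝ) ≤ d := by exact_mod_cast hd
  have hlog : log (((2 * M + 1 : ℕ) : ℝ) ^ d * 4 + 1) ≤ 13 * d * 2 ^ J := by
    have h1 : (M:ℝ) < exp (2^J) + 1 := Nat.ceil_lt_add_one (exp_pos _).le
    have h2 : (1:ℝ) ≤ exp (2^J) := Real.one_le_exp (by positivity)
    have h3 : ((2 * M + 1 : ℕ) : ℝ) ≤ 5 * exp (2^J) := by push_cast; linarith
    have h4 : (1:ℝ) ≤ ((2 * M + 1 : ℕ) : ℝ) := by push_cast; linarith [Nat.cast_nonneg (α := ℝ) M]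
    have h5 : ((2 * M + 1 : ℕ) : ℝ) ^ d * 4 + 1 ≤ (25 * exp (2^J)) ^ d := by
      calc ((2 * M + 1 : ℕ) : ℝ) ^ d * 4 + 1 ≤ 5 * ((2 * M + 1 : ℕ) : ℝ) ^ d := by
            linarith [one_le_pow₀ (n := d) h4]
        _ ≤ 5 ^ d * (5 * exp (2^J)) ^ d := by
            gcongr
            exact le_self_pow₀ (by norm_num) (by omega)
        _ = _ := by rw [← mul_pow]; ring_nf
    calc _ ≤ log ((25 * exp (2^J)) ^ d) := Real.log_le_log (by positivity) h5
      _ = d * (log 25 + 2 ^ J) := by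
        rw [Real.log_pow, Real.log_mul (by norm_num) (exp_pos _).ne', Real.log_exp]
      _ ≤ d * (13 * 2 ^ J) := by
        gcongr
        have h6 : log 25 ≤ 25 - 1 := Real.log_le_sub_one_of_pos (by norm_num)
        have h7 : (2:ℝ) ≤ 2 ^ J := le_self_pow₀ (by norm_num) (by omega)
        linarith
      _ = _ := by ring
  have h8 : (8:ℝ) ^ J = 4 ^ J * 2 ^ J := by rw [← mul_pow]; norm_num
  obtain ⟨x, hxS, hx⟩ := core d J n₁ hJ M (Nat.le_ceil _) (by
    calc _ ≤ 20480 * (J:ℝ) ^ 2 * 4 ^ J * (13 * d * 2 ^ J) := by gcongr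
      _ = 266240 * d * J ^ 2 * 8 ^ J := by rw [h8]; ring
      _ < n₁ := by rw [hn1]; push_cast; linarith)
  refine ⟨J * n₁, ?_, fun i => x (finProdFinEquiv.symm i), fun i => hxS _, fun f hf f' hf' h => ?_⟩
  · rw [hn1]; push_cast
    have h9 : (1:ℝ) ≤ d * J ^ 2 * 8 ^ J :=
      one_le_mul_of_one_le_of_one_le (one_le_mul_of_one_le_of_one_le hdr (one_le_pow₀ hJr))
        (one_le_pow₀ (by norm_num))
    calc (J:ℝ) * (266240 * d * J ^ 2 * 8 ^ J + 1) ≤ J * (270000 * (d * J ^ 2 * 8 ^ J)) := by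
          gcongr; linarith
      _ = _ := by ring
  · refine hx f hf f' hf' fun i => ?_
    simpa using h (finProdFinEquiv i)

lemma to_Lp (d J : ℕ) (p ε : ℝ) (hp : 2 ≤ p) (hε : 0 < ε) (g : (Fin d → ℝ) → ℂ) (hg : Continuous g)
    (hg2 : ∀ y, ‖g y‖ ≤ 2) (hi : ∫ y in cube d, ‖g y‖ ^ 2 ≤ 168 * (1/4) ^ J)
    (hJ : 2 ^ (p - 2) * 168 * ε ^ (-p) ≤ (4:ℝ) ^ J) :
    eLpNorm g (ENNReal.ofReal p) (volume.restrict (cube d)) ≤ ENNReal.ofReal ε := by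
  have hp0 : 0 < p := by linarith
  have hmem : MemLp g (ENNReal.ofReal p) (volume.restrict (cube d)) :=
    MemLp.of_bound hg.aestronglyMeasurable 2 (Filter.Eventually.of_forall hg2)
  rw [hmem.eLpNorm_eq_integral_rpow_norm (by simpa using hp0) ENNReal.ofReal_ne_top,
    ENNReal.toReal_ofReal hp0.le]
  apply ENNReal.ofReal_le_ofReal
  have hint1 : Integrable (fun y => ‖g y‖ ^ 2) (volume.restrict (cube d)) := by
    refine Integrable.of_bound ((hg.norm.pow 2).measurable).aestronglyMeasurable 4
      (Filter.Eventually.of_forall fun y => ?_)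
    rw [Real.norm_of_nonneg (by positivity)]
    nlinarith [hg2 y, norm_nonneg (g y)]
  have h1 : ∫ y in cube d, ‖g y‖ ^ p ≤ ε ^ p := by
    calc ∫ y in cube d, ‖g y‖ ^ p ≤ ∫ y in cube d, 2 ^ (p - 2) * ‖g y‖ ^ 2 := by
          refine integral_mono_of_nonneg (Filter.Eventually.of_forall fun y => by positivity)
            (hint1.const_mul _) (Filter.Eventually.of_forall fun y => ?_)
          simp only
          have e : ‖g y‖ ^ p = ‖g y‖ ^ (p - 2) * ‖g y‖ ^ 2 := by
            rw [← Real.rpow_natCast, ← Real.rpow_add_of_nonneg (norm_nonneg _) (by linarith) (by norm_num)]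
            norm_num
          rw [e]
          exact mul_le_mul_of_nonneg_right (Real.rpow_le_rpow (norm_nonneg _) (hg2 y) (by linarith)) (by positivity)
      _ = 2 ^ (p - 2) * ∫ y in cube d, ‖g y‖ ^ 2 := integral_const_mul _ _
      _ ≤ 2 ^ (p - 2) * (168 * (1/4) ^ J) := by gcongr
      _ ≤ ε ^ p := by
          rw [Real.rpow_neg hε.le] at hJ
          have hεp : 0 < ε ^ p := Real.rpow_pos_of_pos hε _
          rw [← div_eq_mul_inv, div_le_iff₀ hεp] at hJ
          rw [one_div_pow, ← mul_assoc, mul_one_div, div_le_iff₀ (by positivity)]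
          linarith
  calc (∫ y in cube d, ‖g y‖ ^ p) ^ p⁻¹ ≤ (ε ^ p) ^ p⁻¹ := by
        apply Real.rpow_le_rpow (integral_nonneg fun y => by positivity) h1 (by positivity)
    _ = ε := Real.rpow_rpow_inv hε.le hp0.ne'


/-- Corollary `cor:Goda`: for `2 ≤ p < ∞` there is a constant `c > 0`
(depending only on `p`) such that for all `d ≥ 2` and `ε ∈ (0,1/2)`,
`n(ε, F_d^log, L_p) ≤ c d ε^{-3p/2} log³(ε^{-p})`. -/
theorem statement4 :
    ∀ p : ℝ, 2 ≤ p →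
      ∃ c : ℝ, 0 < c ∧
        ∀ (d : ℕ) (ε : ℝ), 2 ≤ d → ε ∈ Set.Ioo (0 : ℝ) (1/2) →
          ∃ n : ℕ, (n : ℝ) ≤ c * d * ε ^ (-(3 * p) / 2) * Real.log (ε ^ (-p)) ^ 3 ∧
            ∃ (x : Fin n → (Fin d → ℝ)) (φ : (Fin n → ℂ) → ((Fin d → ℝ) → ℂ)),
              (∀ i, x i ∈ cube d) ∧
              ∀ f ∈ FdLog d,
                eLpNorm (fun t => f t - φ (fun i => f (x i)) t) (ENNReal.ofReal p)
                    (volume.restrict (cube d))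
                  ≤ ENNReal.ofReal ε := by
  classical
  intro p hp
  set A0 : ℝ := 2 ^ (p - 2) * 168 with hA0
  have h2p : (1:ℝ) ≤ 2 ^ (p - 2) := Real.one_le_rpow (by norm_num) (by linarith)
  have hA0p : 168 ≤ A0 := by rw [hA0]; linarith
  have hlA0 : 0 ≤ log A0 := Real.log_nonneg (by linarith)
  refine ⟨270000 * (log A0 + 2) ^ 3 * (4 * A0) ^ (3/2 : ℝ), by positivity, fun d ε hd hε => ?_⟩
  have hε0 : 0 < ε := hε.1
  set ℓ := log (ε ^ (-p)) with hℓ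
  have hεp : 0 < ε ^ (-p) := Real.rpow_pos_of_pos hε0 _
  have hℓ1 : 1 ≤ ℓ := by
    rw [hℓ, Real.log_rpow hε0]
    have h1 : log ε ≤ log (1/2) := Real.log_le_log hε0 hε.2.le
    have h2 : log (1/2 : ℝ) = - log 2 := by rw [one_div, Real.log_inv]
    have h3 := Real.log_two_gt_d9
    nlinarith
  set A := A0 * ε ^ (-p) with hA
  have hεp1 : 1 ≤ ε ^ (-p) := by
    rw [← Real.log_nonneg_iff hεp]; linarith
  have hA1 : 168 ≤ A := by rw [hA]; nlinarith
  have hl4 : 1 ≤ log 4 := by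
    have : log (4:ℝ) = 2 * log 2 := by
      rw [show (4:ℝ) = 2 ^ 2 by norm_num, Real.log_pow]; norm_num
    have h3 := Real.log_two_gt_d9
    linarith
  have hlA : 0 < log A := Real.log_pos (by linarith)
  set J := ⌈log A / log 4⌉₊ with hJ
  have hJ1 : 1 ≤ J := Nat.one_le_ceil_iff.mpr (by positivity)
  have hJa : log A / log 4 ≤ J := Nat.le_ceil _
  have hJb : (J:ℝ) < log A / log 4 + 1 := Nat.ceil_lt_add_one (by positivity)
  have h4J : A ≤ 4 ^ J := by
    rw [← Real.log_le_log_iff (by linarith) (by positivity), Real.log_pow]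
    exact (div_le_iff₀ (by linarith)).mp hJa
  have h4J2 : (4:ℝ) ^ J ≤ 4 * A := by
    rw [← Real.log_le_log_iff (by positivity) (by positivity), Real.log_pow,
      Real.log_mul (by norm_num) (by positivity)]
    have : (J:ℝ) * log 4 < (log A / log 4 + 1) * log 4 := by gcongr
    rw [add_mul, div_mul_cancel₀ _ (by linarith)] at this
    linarith
  have hJl : (J:ℝ) ≤ (log A0 + 2) * ℓ := by
    have h1 : log A / log 4 ≤ log A := div_le_self hlA.le hl4
    have h2 : log A = log A0 + ℓ := Real.log_mul (by positivity) hεp.ne'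
    nlinarith
  have h8J : (8:ℝ) ^ J ≤ (4 * A0) ^ (3/2 : ℝ) * ε ^ (-(3 * p) / 2) := by
    have e1 : (8:ℝ) ^ J = ((4:ℝ) ^ J) ^ (3/2 : ℝ) := by
      rw [← Real.rpow_natCast 4, ← Real.rpow_mul (by norm_num), mul_comm, Real.rpow_mul (by norm_num),
        Real.rpow_natCast]
      congr 1
      rw [show (4:ℝ) = 2 ^ (2:ℝ) by norm_num, ← Real.rpow_mul (by norm_num)]
      norm_num
    have e2 : (4 * A0) ^ (3/2 : ℝ) * ε ^ (-(3 * p) / 2) = (4 * A) ^ (3/2 : ℝ) := by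
      rw [hA, show 4 * (A0 * ε ^ (-p)) = (4 * A0) * ε ^ (-p) by ring, Real.mul_rpow (by positivity) hεp.le, ← Real.rpow_mul hε0.le]
      congr 2
      ring
    rw [e1, e2]
    exact Real.rpow_le_rpow (by positivity) h4J2 (by norm_num)
  obtain ⟨n, hn, x, hxS, hx⟩ := core2 d J (by omega) hJ1
  refine ⟨n, ?_, x, fun v => if h : ∃ f' ∈ FdLog d, (fun i => f' (x i)) = v then h.choose else 0,
    hxS, fun f hf => ?_⟩
  · calc (n:ℝ) ≤ 270000 * d * J ^ 3 * 8 ^ J := hn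
      _ ≤ 270000 * d * ((log A0 + 2) * ℓ) ^ 3 * ((4 * A0) ^ (3/2 : ℝ) * ε ^ (-(3 * p) / 2)) := by
        gcongr
      _ = _ := by ring
  · have hex : ∃ f' ∈ FdLog d, (fun i => f' (x i)) = fun i => f (x i) := ⟨f, hf, rfl⟩
    simp only [dif_pos hex]
    obtain ⟨hf', heq⟩ := hex.choose_spec
    obtain ⟨hb, hi⟩ := hx f hf _ hf' fun i => (congrFun heq i).symm
    exact to_Lp d J p ε hp hε0 (fun t => f t - hex.choose t) (hf.1.sub hf'.1) hb hi h4J
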